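/- Let X and Y be T0 Alexandroff spaces. Suppose there is a sequence of continuous maps f_1, f_2, … : X → Y such that f_i(x) ∼ f_{i+1}(x) for all x ∈ X and all i ∈ ℕ, and a continuous map f_ω : X → Y such that for every x ∈ X there exists N ∈ ℕ with f_n(x) ≤ f_ω(x) for all n ≥ N. Then f_1 is homotopic to f_ω. -/

import Mathlib

/-- Specialization order on a topological space: `x ≤ y` iff `y ∈ closure {x}`. -/
def specLE {X : Type*} [TopologicalSpace X] (x y : X) : Prop := y ∈ closure ({x} : Set X)

/-- Comparability in the specialization order. -/
def specComp {X : Type*} [TopologicalSpace X] (x y : X) : Prop := specLE x y ∨ specLE y x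

/-!
A time `s ∈ [0, ∞)` is at distance less than `1` from one natural number or from two consecutive
ones, so among the values `f k x` with `|s - k| < 1` one specializes to the others. Taking this
most generic value at `(s, x)` is continuous: if it is `f k x`, then for `(s', x')` near `(s, x)`
still `|s' - k| < 1`, so the value at `(s', x')` specializes to `f k x'`, which tends to `f k x`.
At `s = ∞` the map extends by `fω`, and `[0, ∞]` is an interval. In an Alexandroff space every
point near `x` specializes to `x`, hence `f n x' ⤳ f n x ⤳ fω x` for all large `n` and all `x'`
near `x`, which is the continuity at `∞`.
-/

open Filter Topology
open scoped NNReal ENNReal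

section Specialization

variable {X Y α : Type*} [TopologicalSpace X] [TopologicalSpace Y]

lemma specLE_iff_specializes {x y : X} : specLE x y ↔ x ⤳ y :=
  specializes_iff_mem_closure.symm

lemma specComp_iff_specializes_or {x y : X} : specComp x y ↔ x ⤳ y ∨ y ⤳ x :=
  or_congr specLE_iff_specializes specLE_iff_specializes

lemma tendsto_nhds_of_eventually_specializes {l : Filter α} {u v : α → Y} {y : Y}
    (hv : Tendsto v l (𝓝 y)) (huv : ∀ᶠ a in l, u a ⤳ v a) : Tendsto u l (𝓝 y) := by
  refine tendsto_nhds.2 fun U hU hyU ↦ ?_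
  filter_upwards [huv, hv (hU.mem_nhds hyU)] with a ha hva
  exact ha.mem_open hU hva

lemma eventually_nhds_specializes [AlexandrovDiscrete X] (x : X) : ∀ᶠ x' in 𝓝 x, x' ⤳ x := by
  filter_upwards [isOpen_nhdsKer.mem_nhds (subset_nhdsKer (Set.mem_singleton x))] with x' hx'
  exact mem_nhdsKer_singleton.1 hx'

lemma tendsto_prod_nhds_of_eventually_specLE [AlexandrovDiscrete X] {l : Filter α}
    {f : α → X → Y} {x : X} {y : Y} (hf : ∀ a, ContinuousAt (f a) x)
    (h : ∀ᶠ a in l, specLE (f a x) y) :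
    Tendsto (fun p : α × X ↦ f p.1 p.2) (l ×ˢ 𝓝 x) (𝓝 y) := by
  refine tendsto_nhds_of_eventually_specializes tendsto_const_nhds ?_
  filter_upwards [h.prod_mk (eventually_nhds_specializes x)] with ⟨a, x'⟩ ⟨ha, hx'⟩
  exact (hx'.map_of_continuousAt (hf a)).trans (specLE_iff_specializes.1 ha)

end Specialization

lemma eq_floor_or_eq_floor_add_one_of_lt_add_one {R : Type*} [Semiring R] [LinearOrder R]
    [IsStrictOrderedRing R] [FloorSemiring R] {s : R} (hs : 0 ≤ s) {k : ℕ}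
    (hks : (k : R) < s + 1) (hsk : s < k + 1) :
    k = ⌊s⌋₊ ∨ k = ⌊s⌋₊ + 1 ∧ s ≠ ⌊s⌋₊ := by
  have hle : ⌊s⌋₊ ≤ k := Nat.lt_succ_iff.1 ((Nat.floor_lt hs).2 (mod_cast hsk))
  have hge : k ≤ ⌊s⌋₊ + 1 := by
    rw [← Nat.floor_add_one hs]
    exact Nat.le_floor hks.le
  refine hle.eq_or_lt.imp Eq.symm fun hlt ↦ ?_
  obtain rfl : k = ⌊s⌋₊ + 1 := by omega
  refine ⟨rfl, fun hs_floor ↦ hks.ne ?_⟩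
  push_cast
  rw [← hs_floor]

section GenericIndex

variable {Y : Type*} [TopologicalSpace Y] {y : ℕ → Y} {s : ℝ≥0}

open Classical in
/-- For a sequence `y` with consecutive terms comparable, an index `k` with `|s - k| < 1` whose
term `y k` specializes to all the terms with such an index. -/
noncomputable def genericIndex (y : ℕ → Y) (s : ℝ≥0) : ℕ :=
  if s = ⌊s⌋₊ ∨ y ⌊s⌋₊ ⤳ y (⌊s⌋₊ + 1) then ⌊s⌋₊ else ⌊s⌋₊ + 1

@[simp]
lemma genericIndex_zero : genericIndex y 0 = 0 := by
  simp [genericIndex]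

lemma genericIndex_lt_add_one (y : ℕ → Y) (s : ℝ≥0) :
    (genericIndex y s : ℝ≥0) < s + 1 := by
  have hfloor : (⌊s⌋₊ : ℝ≥0) ≤ s := Nat.floor_le zero_le
  rw [genericIndex]
  split_ifs with h
  · exact hfloor.trans_lt (lt_add_one s)
  · push_cast
    gcongr
    exact hfloor.lt_of_ne' (not_or.1 h).1

lemma lt_genericIndex_add_one (y : ℕ → Y) (s : ℝ≥0) : s < genericIndex y s + 1 := by
  have hfloor : s < ⌊s⌋₊ + 1 := Nat.lt_floor_add_one s
  rw [genericIndex]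
  split_ifs
  · exact hfloor
  · push_cast
    exact hfloor.trans (lt_add_one _)

lemma genericIndex_specializes (hy : ∀ i, specComp (y i) (y (i + 1))) {k : ℕ}
    (hks : (k : ℝ≥0) < s + 1) (hsk : s < k + 1) : y (genericIndex y s) ⤳ y k := by
  rw [genericIndex]
  obtain rfl | ⟨rfl, hs⟩ := eq_floor_or_eq_floor_add_one_of_lt_add_one zero_le hks hsk
  · split_ifs with h
    · exact specializes_rfl
    · exact (specComp_iff_specializes_or.1 (hy _)).resolve_left (not_or.1 h).2
  · split_ifs with h
    · exact h.resolve_left hs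
    · exact specializes_rfl

end GenericIndex

section Telescope

variable {X Y : Type*} [TopologicalSpace Y] {f : ℕ → X → Y} {g : X → Y}

/-- The infinite concatenation, over the time interval `[0, ∞]`, of homotopies between consecutive
maps `f n` and `f (n + 1)`: at a finite time `s` it takes the most generic of the values `f k x`
with `|s - k| < 1`, and at time `∞` it is `g`. -/
noncomputable def telescope (f : ℕ → X → Y) (g : X → Y) (p : ℝ≥0∞ × X) : Y :=
  p.1.recTopCoe (g p.2) fun s ↦ f (genericIndex (f · p.2) s) p.2

@[simp]
lemma telescope_top (x : X) : telescope f g (∞, x) = g x := rfl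

lemma telescope_coe (s : ℝ≥0) (x : X) :
    telescope f g (s, x) = f (genericIndex (f · x) s) x := rfl

@[simp]
lemma telescope_zero (x : X) : telescope f g (0, x) = f 0 x := by
  rw [← ENNReal.coe_zero, telescope_coe, genericIndex_zero]

lemma telescope_specializes (hf : ∀ i x, specComp (f i x) (f (i + 1) x)) {s : ℝ≥0∞} {k : ℕ}
    (hks : (k : ℝ≥0∞) < s + 1) (hsk : s < k + 1) (x : X) : telescope f g (s, x) ⤳ f k x := by
  lift s to ℝ≥0 using hsk.ne_top
  exact genericIndex_specializes (hf · x) (mod_cast hks) (mod_cast hsk)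

variable [TopologicalSpace X]

lemma continuousAt_telescope_coe (hf : ∀ i x, specComp (f i x) (f (i + 1) x)) (s : ℝ≥0) {x : X}
    (hfc : ∀ n, ContinuousAt (f n) x) :
    ContinuousAt (telescope f g) (s, x) := by
  set k := genericIndex (f · x) s
  have hks : (k : ℝ≥0∞) < s + 1 := mod_cast genericIndex_lt_add_one (f · x) s
  have hsk : (s : ℝ≥0∞) < k + 1 := mod_cast lt_genericIndex_add_one (f · x) s
  have hfst : Tendsto Prod.fst (𝓝 ((s : ℝ≥0∞), x)) (𝓝 (s : ℝ≥0∞)) := continuousAt_fst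
  have hfk : Tendsto (fun p : ℝ≥0∞ × X ↦ f k p.2) (𝓝 ((s : ℝ≥0∞), x)) (𝓝 (f k x)) :=
    (hfc k).tendsto.comp continuousAt_snd
  refine tendsto_nhds_of_eventually_specializes hfk ?_
  filter_upwards [(hfst.add_const 1).eventually_const_lt hks, hfst.eventually_lt_const hsk]
    with p hkp hpk
  exact telescope_specializes hf hkp hpk p.2

lemma continuousAt_telescope_top {x : X} (hg : ContinuousAt g x)
    (hlim : Tendsto (fun p : ℕ × X ↦ f p.1 p.2) (atTop ×ˢ 𝓝 x) (𝓝 (g x))) :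
    ContinuousAt (telescope f g) (∞, x) := by
  refine tendsto_nhds.2 fun U hU hxU ↦ ?_
  have hUx : U ∈ 𝓝 (g x) := hU.mem_nhds hxU
  obtain ⟨N, hN⟩ : ∃ N : ℕ, ∀ᶠ x' in 𝓝 x, ∀ n ≥ N, f n x' ∈ U := by
    obtain ⟨P, hP, Q, hQ, hPQ⟩ := eventually_prod_iff.1 (hlim hUx)
    obtain ⟨N, hN⟩ := eventually_atTop.1 hP
    exact ⟨N, hQ.mono fun x' hx' n hn ↦ hPQ (hN n hn) hx'⟩
  rw [nhds_prod_eq]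
  filter_upwards [(lt_mem_nhds (ENNReal.natCast_lt_top N)).prod_mk (hN.and (hg hUx))]
    with ⟨s, x'⟩ ⟨hNs, hfU, hgU⟩
  induction s using ENNReal.recTopCoe with
  | top => exact hgU
  | coe s =>
    have hNs : (N : ℝ≥0) < s := ENNReal.coe_lt_coe.1 hNs
    have hlt : (N : ℝ≥0) < genericIndex (f · x') s + 1 :=
      hNs.trans (lt_genericIndex_add_one _ s)
    exact hfU _ (Nat.lt_succ_iff.1 (mod_cast hlt))

lemma continuous_telescope (hfc : ∀ n, Continuous (f n)) (hg : Continuous g)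
    (hf : ∀ i x, specComp (f i x) (f (i + 1) x))
    (hlim : ∀ x, Tendsto (fun p : ℕ × X ↦ f p.1 p.2) (atTop ×ˢ 𝓝 x) (𝓝 (g x))) :
    Continuous (telescope f g) := by
  refine continuous_iff_continuousAt.2 fun ⟨s, x⟩ ↦ ?_
  induction s using ENNReal.recTopCoe with
  | top => exact continuousAt_telescope_top hg.continuousAt (hlim x)
  | coe s => exact continuousAt_telescope_coe hf s fun n ↦ (hfc n).continuousAt

end Telescope

section Homotopy

variable {X Y : Type*} [TopologicalSpace X] [TopologicalSpace Y]

lemma homotopic_of_continuous_ennreal_prod {f g : C(X, Y)} {H : ℝ≥0∞ × X → Y}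
    (hH : Continuous H) (h_zero : ∀ x, H (0, x) = f x) (h_top : ∀ x, H (∞, x) = g x) :
    f.Homotopic g := by
  let e : unitInterval ≃o ℝ≥0∞ := ENNReal.orderIsoUnitIntervalBirational.symm
  have he_zero : e 0 = 0 := e.map_bot
  have he_one : e 1 = ∞ := e.map_top
  exact ⟨{
    toFun p := H (e p.1, p.2)
    continuous_toFun := hH.comp (e.continuous.prodMap continuous_id)
    map_zero_left x := by rw [he_zero, h_zero]
    map_one_left x := by rw [he_one, h_top] }⟩

theorem stmt13_general (f : ℕ → C(X, Y)) (fω : C(X, Y))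
    (hcomp : ∀ (i : ℕ) (x : X), specComp (f i x) (f (i + 1) x))
    (hlim : ∀ x : X, Tendsto (fun p : ℕ × X ↦ f p.1 p.2) (atTop ×ˢ 𝓝 x) (𝓝 (fω x))) (m : ℕ) :
    (f m).Homotopic fω := by
  have hadd : Tendsto (m + ·) atTop atTop :=
    tendsto_atTop_mono (fun n ↦ n.le_add_left m) tendsto_id
  have hshift (x : X) :
      Tendsto (fun p : ℕ × X ↦ f (m + p.1) p.2) (atTop ×ˢ 𝓝 x) (𝓝 (fω x)) :=
    (hlim x).comp (hadd.prodMap tendsto_id)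
  have hcont : Continuous (telescope (fun n ↦ f (m + n)) fω) :=
    continuous_telescope (fun n ↦ (f (m + n)).continuous) fω.continuous
      (fun i ↦ hcomp (m + i)) hshift
  exact homotopic_of_continuous_ennreal_prod hcont telescope_zero telescope_top

end Homotopy

/-- Let `f_1, f_2, … : X → Y` be continuous maps between T0 Alexandroff spaces with
`f_i(x)` comparable to `f_{i+1}(x)` for all `x, i`, and let `f_ω` be continuous with:
for every `x` there is `N` such that `f_n(x) ≤ f_ω(x)` for all `n ≥ N`. Then `f_1` is
homotopic to `f_ω`. -/
theorem stmt13 {X Y : Type*} [TopologicalSpace X] [AlexandrovDiscrete X] [T0Space X]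
    [TopologicalSpace Y] [AlexandrovDiscrete Y] [T0Space Y]
    (f : ℕ → C(X, Y)) (fω : C(X, Y))
    (hcomp : ∀ (i : ℕ) (x : X), specComp (f i x) (f (i + 1) x))
    (hlim : ∀ x : X, ∃ N : ℕ, ∀ n ≥ N, specLE (f n x) (fω x)) :
    (f 1).Homotopic fω :=
  stmt13_general f fω hcomp (fun x ↦ tendsto_prod_nhds_of_eventually_specLE
    (fun n ↦ (f n).continuous.continuousAt) (eventually_atTop.2 (hlim x))) 1
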